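/- Let X be an involutive BE algebra. Then the identity x ⊓ (y→x) = x holds for all x, y ∈ X if and only if the orthomodularity identity (Pom) holds for all x, y ∈ X: (x ⊙ y) ⊕ ((x ⊙ y)* ⊙ x) = x, where x ⊕ y := (x* ⊙ y*)*. Hence implicative-orthomodular algebras are definitionally equivalent to orthomodular algebras. -/

import Mathlib

/-!
By contraposition `a → b = b* → a*`, one has `a ⊕ (a* ⊙ x) = (x → a) → a` and
`(y → x)* = x* ⊙ y`. So (Pom) reads `(x → x ⊙ y) → x ⊙ y = x`, while the complement of
`x ⊓ (y → x) = x` reads `(u → u ⊙ y) → u ⊙ y = u` with `u = x*`. As complementation is a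
bijection, the two identities are the same.
-/


/-- An involutive BE algebra `(X, →, 0, 1)`. -/
structure InvBE (X : Type*) where
  imp : X → X → X
  one : X
  zero : X
  imp_self : ∀ x, imp x x = one
  imp_one : ∀ x, imp x one = one
  one_imp : ∀ x, imp one x = x
  exchange : ∀ x y z, imp x (imp y z) = imp y (imp x z)
  zero_imp : ∀ x, imp zero x = one
  imp_involutive : ∀ x, imp (imp x zero) zero = x

namespace InvBE

variable {X : Type*} (A : InvBE X)

/-- `x* := x → 0`. -/
def neg (x : X) : X := A.imp x A.zero

/-- `x ⊓ y := ((x* → y*) → y*)*`. -/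
def inf (x y : X) : X := A.neg (A.imp (A.imp (A.neg x) (A.neg y)) (A.neg y))

/-- `x ∪ y := (x → y) → y`. -/
def sup (x y : X) : X := A.imp (A.imp x y) y

/-- `x ⊙ y := (x → y*)*`. -/
def odot (x y : X) : X := A.neg (A.imp x (A.neg y))

/-- `x ⊕ y := (x* ⊙ y*)*`. -/
def oplus (x y : X) : X := A.neg (A.odot (A.neg x) (A.neg y))

/-- `x ≤_Q y` iff `x = x ⊓ y`. -/
def leQ (x y : X) : Prop := x = A.inf x y

/-- `x ≤ y` iff `x → y = 1`. -/
def le (x y : X) : Prop := A.imp x y = A.one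

/-- (IOM): `x ⊓ (y → x) = x` for all `x, y`. -/
def IOM : Prop := ∀ x y, A.inf x (A.imp y x) = x

/-- (QW): `x → ((x ⊓ y) ⊓ (z ⊓ x)) = (x → y) ⊓ (x → z)` for all `x, y, z`. -/
def QW : Prop :=
  ∀ x y z, A.imp x (A.inf (A.inf x y) (A.inf z x)) = A.inf (A.imp x y) (A.imp x z)

/-- A filter: nonempty, closed under `⊙`, upward closed for `≤_Q`. -/
def IsFilter (F : Set X) : Prop :=
  F.Nonempty ∧ (∀ x ∈ F, ∀ y ∈ F, A.odot x y ∈ F) ∧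
    (∀ x ∈ F, ∀ y : X, A.leQ x y → y ∈ F)

/-- A deductive system: contains `1` and is closed under modus ponens. -/
def IsDS (F : Set X) : Prop :=
  A.one ∈ F ∧ ∀ x y : X, x ∈ F → A.imp x y ∈ F → y ∈ F

/-- `pow x n` is the `⊙`-product of `n + 1` copies of `x`, i.e. `x^(n+1)`. -/
def pow (x : X) : ℕ → X
  | 0 => x
  | n + 1 => A.odot x (pow x n)

/-- A maximal filter: proper and not contained in any other proper filter. -/
def IsMaximalFilter (F : Set X) : Prop :=
  A.IsFilter F ∧ F ≠ Set.univ ∧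
    ∀ G : Set X, A.IsFilter G → F ⊆ G → G ≠ Set.univ → G = F

/-- A strongly maximal filter: for every `x ∉ F` there is `n ≥ 1` with `(xⁿ)* ∈ F`. -/
def IsStronglyMaximalFilter (F : Set X) : Prop :=
  A.IsFilter F ∧ ∀ x : X, x ∉ F → ∃ n : ℕ, A.neg (A.pow x n) ∈ F

/-- `x ≡_F y` iff there is `f` with `x, y ≤_Q f` and `f → x, f → y ∈ F`. -/
def cong (F : Set X) (x y : X) : Prop :=
  ∃ f : X, A.leQ x f ∧ A.leQ y f ∧ A.imp f x ∈ F ∧ A.imp f y ∈ F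

end InvBE

namespace InvBE

variable {X : Type*} (A : InvBE X)

theorem neg_neg' (x : X) : A.neg (A.neg x) = x := A.imp_involutive x

theorem imp_neg_comm (x y : X) : A.imp x (A.neg y) = A.imp y (A.neg x) :=
  A.exchange x y A.zero

theorem neg_imp_neg (x y : X) : A.imp (A.neg x) (A.neg y) = A.imp y x := by
  rw [imp_neg_comm, neg_neg']

/-- The left-hand side of (Pom), with `a` in place of `x ⊙ y`, is `x ∪ a`. -/
theorem oplus_neg_odot (a x : X) :
    A.oplus a (A.odot (A.neg a) x) = A.imp (A.imp x a) a := by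
  simp only [oplus, odot, neg_neg', neg_imp_neg]

/-- The complement of the left-hand side of (IOM). -/
theorem neg_inf_imp (x y : X) :
    A.neg (A.inf x (A.imp y x)) =
      A.imp (A.imp (A.neg x) (A.odot (A.neg x) y)) (A.odot (A.neg x) y) := by
  simp only [inf, odot, neg_neg', neg_imp_neg]

end InvBE

/-- (IOM) `x ⊓ (y → x) = x` holds for all `x, y` iff the orthomodularity identity
(Pom) `(x ⊙ y) ⊕ ((x ⊙ y)* ⊙ x) = x` holds for all `x, y`. -/
theorem stmt_2 {X : Type*} (A : InvBE X) :
    (∀ x y : X, A.inf x (A.imp y x) = x) ↔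
      (∀ x y : X, A.oplus (A.odot x y) (A.odot (A.neg (A.odot x y)) x) = x) := by
  simp only [InvBE.oplus_neg_odot]
  constructor
  · intro h x y
    have := A.neg_inf_imp (A.neg x) y
    rw [h, A.neg_neg'] at this
    exact this.symm
  · intro h x y
    rw [← A.neg_neg' (A.inf x _), A.neg_inf_imp, h, A.neg_neg']
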